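/- Let k be a commutative ring, and let C and D be ℕ-indexed chain complexes of k-modules. Assume that every term C_i of C is a flat k-module and that every boundary module B_i(C) = im(d: C_{i+1} → C_i) is a flat k-module. Then for every n ≥ 0 there is a natural short exact sequence of k-modules 0 → ⊕_{i+j=n} H_i(C) ⊗_k H_j(D) → H_n(C ⊗ D) → ⊕_{i+j=n-1} Tor_1^k(H_i(C), H_j(D)) → 0. -/

import Mathlib

open CategoryTheory Limits MonoidalCategory

noncomputable instance (k : Type) [CommRing k] : (curriedTensor (ModuleCat k)).Additive where
  map_add := by intros; ext : 2; simp [curriedTensor, MonoidalPreadditive.add_whiskerRight]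

noncomputable instance (k : Type) [CommRing k] (X : ModuleCat k) :
    ((curriedTensor (ModuleCat k)).obj X).Additive where
  map_add := by intros; simp [curriedTensor, MonoidalPreadditive.whiskerLeft_add]


theorem ku_lift {k W X Y : Type} [CommRing k] [AddCommGroup W] [Module k W] [AddCommGroup X]
    [Module k X] [AddCommGroup Y] [Module k Y] (p : W →ₗ[k] X) (q : W →ₗ[k] Y)
    (hp : Function.Surjective p) (h : ∀ w, p w = 0 → q w = 0) :
    ∃ t : X →ₗ[k] Y, ∀ w, t (p w) = q w := by
  have h' : LinearMap.ker p ≤ LinearMap.ker q := fun w hw => h w hw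
  refine ⟨(LinearMap.ker p).liftQ q h' ∘ₗ (p.quotKerEquivOfSurjective hp).symm.toLinearMap, ?_⟩
  intro w
  have : (p.quotKerEquivOfSurjective hp).symm (p w) = Submodule.Quotient.mk w := by
    rw [LinearEquiv.symm_apply_eq]; rfl
  simp [this]

theorem ku_colift {k W X Y : Type} [CommRing k] [AddCommGroup W] [Module k W] [AddCommGroup X]
    [Module k X] [AddCommGroup Y] [Module k Y] (p : X →ₗ[k] W) (q : Y →ₗ[k] W)
    (hp : Function.Injective p) (h : ∀ y, ∃ x, p x = q y) :
    ∃ t : Y →ₗ[k] X, ∀ y, p (t y) = q y := by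
  refine ⟨(LinearEquiv.ofInjective p hp).symm.toLinearMap ∘ₗ
    q.codRestrict (LinearMap.range p) (fun y => h y), ?_⟩
  intro y
  have := (LinearEquiv.ofInjective p hp).apply_symm_apply (q.codRestrict (LinearMap.range p) (fun y => h y) y)
  exact congrArg Subtype.val this

section
variable {k : Type} [CommRing k] {A B C D E F : Type} [AddCommGroup A] [Module k A]
  [AddCommGroup B] [Module k B] [AddCommGroup C] [Module k C] [AddCommGroup D] [Module k D]
  [AddCommGroup E] [Module k E] [AddCommGroup F] [Module k F]

theorem ku_comm (f : A →ₗ[k] B) (g : C →ₗ[k] D) (x : TensorProduct k A C) :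
    f.rTensor D (g.lTensor A x) = g.lTensor B (f.rTensor C x) := by
  rw [← LinearMap.comp_apply, ← LinearMap.comp_apply, LinearMap.rTensor_comp_lTensor,
    LinearMap.lTensor_comp_rTensor]

theorem ku_F1' (i : A →ₗ[k] B) (p : B →ₗ[k] C) (hi : Function.Injective i)
    (hp : Function.Surjective p) (hip : Function.Exact i p) [Module.Flat k C] [Module.Flat k F]
    (κ : E →ₗ[k] F) (π : F →ₗ[k] D) (hκ : Function.Injective κ) (hK : Function.Exact κ π)
    (hπ : Function.Surjective π) :
    Function.Injective (i.rTensor D) := by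
  rw [injective_iff_map_eq_zero]
  intro x hx
  obtain ⟨x', rfl⟩ := LinearMap.lTensor_surjective A hπ x
  rw [ku_comm] at hx
  obtain ⟨c, hc⟩ := (lTensor_exact B hK hπ _).1 hx
  have h1 : p.rTensor E c = 0 := by
    apply Module.Flat.lTensor_preserves_injective_linearMap (M := C) κ hκ
    rw [← ku_comm, hc, map_zero]
    exact (rTensor_exact _ hip hp _).2 ⟨_, rfl⟩
  obtain ⟨z, rfl⟩ := (rTensor_exact _ hip hp _).1 h1
  rw [← ku_comm] at hc
  have := Module.Flat.rTensor_preserves_injective_linearMap (M := F) i hi hc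
  rw [← this]
  exact (lTensor_exact A hK hπ _).2 ⟨_, rfl⟩

theorem ku_F1 (i : A →ₗ[k] B) (p : B →ₗ[k] C) (hi : Function.Injective i)
    (hp : Function.Surjective p) (hip : Function.Exact i p) [Module.Flat k C] :
    Function.Injective (i.rTensor D) := by
  let π : (D →₀ k) →ₗ[k] D := Finsupp.linearCombination k id
  have hπ : Function.Surjective π := Finsupp.linearCombination_id_surjective k D
  exact ku_F1' (E := LinearMap.ker π) (F := D →₀ k) i p hi hp hip (Submodule.subtype _) π (Submodule.subtype_injective _)
    (LinearMap.exact_subtype_ker_map π) hπ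

theorem ku_flat (i : A →ₗ[k] B) (p : B →ₗ[k] C) (hi : Function.Injective i)
    (hp : Function.Surjective p) (hip : Function.Exact i p) [Module.Flat k C] [Module.Flat k B] :
    Module.Flat k A := by
  rw [Module.Flat.iff_lTensor_preserves_injective_linearMap'.{0, 0, 0}]
  intro N N' _ _ _ _ f hf
  rw [injective_iff_map_eq_zero]
  intro x hx
  apply ku_F1 i p hi hp hip
  apply Module.Flat.lTensor_preserves_injective_linearMap (M := B) f hf
  rw [← ku_comm, hx]; simp

end

/-- Tor computation -/
theorem ku_tor {k : Type} [CommRing k] {B Z H P0 P1 P2 Y T : Type}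
  [AddCommGroup B] [Module k B] [AddCommGroup Z] [Module k Z] [AddCommGroup H] [Module k H]
  [AddCommGroup P0] [Module k P0] [AddCommGroup P1] [Module k P1] [AddCommGroup P2] [Module k P2]
  [AddCommGroup Y] [Module k Y] [AddCommGroup T] [Module k T] [Module.Flat k P0] [Module.Flat k Z]
  (i : B →ₗ[k] Z) (p : Z →ₗ[k] H) (hi : Function.Injective i)
  (hp : Function.Surjective p) (hip : Function.Exact i p)
  (d2 : P2 →ₗ[k] P1) (d1 : P1 →ₗ[k] P0) (ε : P0 →ₗ[k] Y) (h21 : Function.Exact d2 d1)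
  (h10 : Function.Exact d1 ε) (hε : Function.Surjective ε)
  {K : Type} [AddCommGroup K] [Module k K] (ι : K →ₗ[k] TensorProduct k H P1) (q : K →ₗ[k] T)
  (hι : Function.Injective ι) (hι' : Function.Exact ι (d1.lTensor H)) (hq : Function.Surjective q)
  (hq' : ∀ x, q x = 0 ↔ ∃ c, d2.lTensor H c = ι x) :
  ∃ t : T →ₗ[k] TensorProduct k B Y, Function.Injective t ∧ Function.Exact t (i.rTensor Y) := by
  let W : Submodule k (TensorProduct k Z P1 × TensorProduct k B P0) :=
    LinearMap.ker ((d1.lTensor Z) ∘ₗ LinearMap.fst k _ _ - (i.rTensor P0) ∘ₗ LinearMap.snd k _ _)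
  have hW : ∀ w : W, d1.lTensor Z w.1.1 = i.rTensor P0 w.1.2 := fun w => by
    have := LinearMap.mem_ker.1 w.2
    rw [LinearMap.sub_apply, sub_eq_zero] at this
    exact this
  obtain ⟨u, hu⟩ := ku_colift ι ((p.rTensor P1) ∘ₗ LinearMap.fst k _ _ ∘ₗ W.subtype) hι (by
    intro w
    apply (hι' _).1
    simp only [LinearMap.comp_apply, LinearMap.fst_apply, Submodule.subtype_apply]
    rw [← ku_comm, hW]
    exact (rTensor_exact _ hip hp _).2 ⟨_, rfl⟩)
  simp only [LinearMap.comp_apply, LinearMap.fst_apply, Submodule.subtype_apply] at hu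
  have hus : Function.Surjective (q ∘ₗ u) := by
    intro t
    obtain ⟨x, rfl⟩ := hq t
    obtain ⟨a, ha⟩ := LinearMap.rTensor_surjective P1 hp (ι x)
    have : p.rTensor P0 (d1.lTensor Z a) = 0 := by
      rw [ku_comm, ha]; exact hι'.apply_apply_eq_zero x
    obtain ⟨b, hb⟩ := (rTensor_exact _ hip hp _).1 this
    refine ⟨⟨(a, b), by simp [W, hb]⟩, ?_⟩
    simp only [LinearMap.comp_apply]
    congr 1
    apply hι
    rw [hu, ha]
  have key : ∀ w : W, q (u w) = 0 ↔ ε.lTensor B w.1.2 = 0 := by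
    intro w
    rw [hq', hu]
    constructor
    · rintro ⟨c, hc⟩
      obtain ⟨c', rfl⟩ := LinearMap.rTensor_surjective P2 hp c
      rw [← ku_comm] at hc
      have : p.rTensor P1 (w.1.1 - d2.lTensor Z c') = 0 := by rw [map_sub, hc, sub_self]
      obtain ⟨b1, hb1⟩ := (rTensor_exact _ hip hp _).1 this
      have h3 : w.1.2 = d1.lTensor B b1 := by
        apply Module.Flat.rTensor_preserves_injective_linearMap (M := P0) i hi
        rw [ku_comm, hb1, map_sub, hW, (Module.Flat.lTensor_exact Z h21).apply_apply_eq_zero, sub_zero]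
      rw [h3]
      exact (lTensor_exact B h10 hε _).2 ⟨_, rfl⟩
    · intro h
      obtain ⟨b1, hb1⟩ := (lTensor_exact B h10 hε _).1 h
      have : d1.lTensor Z (w.1.1 - i.rTensor P1 b1) = 0 := by
        rw [map_sub, hW, ← ku_comm, hb1, sub_self]
      obtain ⟨c, hc⟩ := (Module.Flat.lTensor_exact Z h21 _).1 this
      refine ⟨p.rTensor P2 c, ?_⟩
      rw [← ku_comm, hc, map_sub, (rTensor_exact _ hip hp).apply_apply_eq_zero, sub_zero]
  obtain ⟨t, ht⟩ := ku_lift (q ∘ₗ u) ((ε.lTensor B) ∘ₗ LinearMap.snd k _ _ ∘ₗ W.subtype) hus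
    (fun w hw => (key w).1 hw)
  simp only [LinearMap.comp_apply, LinearMap.snd_apply, Submodule.subtype_apply] at ht
  refine ⟨t, ?_, ?_⟩
  · rw [injective_iff_map_eq_zero]
    intro x hx
    obtain ⟨w, rfl⟩ := hus x
    simp only [LinearMap.comp_apply] at hx ⊢
    rw [ht] at hx
    exact (key w).2 hx
  · intro b'
    constructor
    · intro hb'
      obtain ⟨b, rfl⟩ := LinearMap.lTensor_surjective B hε b'
      rw [ku_comm] at hb'
      obtain ⟨a, ha⟩ := (lTensor_exact Z h10 hε _).1 hb'
      exact ⟨_, ht ⟨(a, b), by simp [W, ha]⟩⟩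
    · rintro ⟨x, rfl⟩
      obtain ⟨w, rfl⟩ := hus x
      simp only [LinearMap.comp_apply]
      rw [ht, ku_comm, ← hW]
      exact (lTensor_exact Z h10 hε _).2 ⟨_, rfl⟩

theorem ku_ext1 {n : ℕ} {X : ℕ → ℕ → Type} [∀ i j, Zero (X i j)]
    (v : ∀ i j, i + j + 1 = n → X (i + 1) j) :
    ∃ V : ∀ p : {p : ℕ × ℕ // p.1 + p.2 = n}, X p.1.1 p.1.2,
      (∀ i j (h : i + j + 1 = n), V ⟨(i + 1, j), by dsimp only; omega⟩ = v i j h) ∧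
      ∀ j (h : 0 + j = n), V ⟨(0, j), h⟩ = 0 :=
  ⟨fun p => match p with
    | ⟨(0, _), _⟩ => 0
    | ⟨(i + 1, j), h⟩ => v i j (by dsimp only at h; omega), fun _ _ _ => rfl, fun _ _ => rfl⟩

theorem ku_ext2 {n : ℕ} {X : ℕ → ℕ → Type} [∀ i j, Zero (X i j)]
    (v : ∀ i j, i + j + 1 = n → X i (j + 1)) :
    ∃ V : ∀ p : {p : ℕ × ℕ // p.1 + p.2 = n}, X p.1.1 p.1.2,
      (∀ i j (h : i + j + 1 = n), V ⟨(i, j + 1), by dsimp only; omega⟩ = v i j h) ∧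
      ∀ i (h : i + 0 = n), V ⟨(i, 0), h⟩ = 0 :=
  ⟨fun p => match p with
    | ⟨(_, 0), _⟩ => 0
    | ⟨(i, j + 1), h⟩ => v i j (by dsimp only at h; omega), fun _ _ _ => rfl, fun _ _ => rfl⟩

theorem ku_ext3 {n : ℕ} {X : ℕ → ℕ → Type} [∀ i j, Zero (X i j)]
    (v : ∀ i j, i + j + 1 = n → X (i + 1) (j + 1)) :
    ∃ V : ∀ p : {p : ℕ × ℕ // p.1 + p.2 = n + 1}, X p.1.1 p.1.2,
      (∀ i j (h : i + j + 1 = n), V ⟨(i + 1, j + 1), by dsimp only; omega⟩ = v i j h) :=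
  ⟨fun p => match p with
    | ⟨(0, _), _⟩ => 0
    | ⟨(_ + 1, 0), _⟩ => 0
    | ⟨(i + 1, j + 1), h⟩ => v i j (by dsimp only at h; omega), fun _ _ _ => rfl⟩

section
variable {k : Type} [CommRing k]

set_option maxHeartbeats 2000000 in
theorem ku_main {C D ZC BC HC ZD HD Q : ℕ → Type} {T : ℕ → ℕ → Type}
    [∀ i, AddCommGroup (C i)] [∀ i, Module k (C i)] [∀ i, AddCommGroup (D i)] [∀ i, Module k (D i)]
    [∀ i, AddCommGroup (ZC i)] [∀ i, Module k (ZC i)] [∀ i, AddCommGroup (BC i)]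
    [∀ i, Module k (BC i)] [∀ i, AddCommGroup (HC i)] [∀ i, Module k (HC i)]
    [∀ i, AddCommGroup (ZD i)] [∀ i, Module k (ZD i)] [∀ i, AddCommGroup (HD i)]
    [∀ i, Module k (HD i)] [∀ i, AddCommGroup (Q i)] [∀ i, Module k (Q i)]
    [∀ i j, AddCommGroup (T i j)] [∀ i j, Module k (T i j)]
    [∀ i, Module.Flat k (C i)] [∀ i, Module.Flat k (BC i)] [∀ i, Module.Flat k (ZC i)]
    (dC : ∀ i, C (i + 1) →ₗ[k] C i) (dD : ∀ i, D (i + 1) →ₗ[k] D i)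
    (iC : ∀ i, ZC i →ₗ[k] C i) (δ : ∀ i, C (i + 1) →ₗ[k] BC i) (β : ∀ i, BC i →ₗ[k] ZC i)
    (πC : ∀ i, ZC i →ₗ[k] HC i)
    (jD : ∀ i, ZD i →ₗ[k] D i) (ζ : ∀ i, D (i + 1) →ₗ[k] ZD i) (πD : ∀ i, ZD i →ₗ[k] HD i)
    (mk : ∀ i, D i →ₗ[k] Q i) (κ : ∀ i, HD i →ₗ[k] Q i)
    (t : ∀ i j, T i j →ₗ[k] TensorProduct k (BC i) (HD j))
    (hdC : ∀ i, dC i = iC i ∘ₗ β i ∘ₗ δ i)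
    (F1 : ∀ i (M : Type) [AddCommGroup M] [Module k M], Function.Injective ((iC i).rTensor M))
    (hδ : ∀ i, Function.Surjective (δ i))
    (hiCδ : ∀ i, Function.Exact (iC (i + 1)) (δ i)) (hiC0 : Function.Surjective (iC 0))
    (hβπ : ∀ i, Function.Exact (β i) (πC i)) (hπC : ∀ i, Function.Surjective (πC i))
    (hjD : ∀ i, Function.Injective (jD i)) (hjDd : ∀ i, Function.Exact (jD (i + 1)) (dD i))
    (hjD0 : Function.Surjective (jD 0)) (hζ : ∀ i, dD i = jD i ∘ₗ ζ i)
    (hζπ : ∀ i, Function.Exact (ζ i) (πD i)) (hπD : ∀ i, Function.Surjective (πD i))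
    (hdmk : ∀ i, Function.Exact (dD i) (mk i)) (hmk : ∀ i, Function.Surjective (mk i))
    (hκ : ∀ i, Function.Injective (κ i)) (hκπ : ∀ i, κ i ∘ₗ πD i = mk i ∘ₗ jD i)
    (ht : ∀ i j, Function.Injective (t i j)) (htβ : ∀ i j, Function.Exact (t i j) ((β i).rTensor (HD j)))
    (n : ℕ) (s : ℕ → k) (hs : ∀ i, s i * s i = 1)
    {KT HT : Type} [AddCommGroup KT] [Module k KT] [AddCommGroup HT] [Module k HT]
    (iT : KT →ₗ[k] (∀ p : {p : ℕ × ℕ // p.1 + p.2 = n}, TensorProduct k (C p.1.1) (D p.1.2)))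
    (qT : KT →ₗ[k] HT)
    (τ : (∀ p : {p : ℕ × ℕ // p.1 + p.2 = n + 1}, TensorProduct k (C p.1.1) (D p.1.2)) →ₗ[k] KT)
    (hiT : Function.Injective iT)
    (hiT1 : ∀ y i j (h : i + j + 1 = n),
      (dC i).rTensor (D j) (iT y ⟨(i + 1, j), by dsimp only; omega⟩) +
      s i • (dD j).lTensor (C i) (iT y ⟨(i, j + 1), by dsimp only; omega⟩) = 0)
    (hiT2 : ∀ x, (∀ i j (h : i + j + 1 = n),
      (dC i).rTensor (D j) (x ⟨(i + 1, j), by dsimp only; omega⟩) +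
      s i • (dD j).lTensor (C i) (x ⟨(i, j + 1), by dsimp only; omega⟩) = 0) → ∃ y, iT y = x)
    (hτ : ∀ v i j (h : i + j = n), iT (τ v) ⟨(i, j), h⟩ =
      (dC i).rTensor (D j) (v ⟨(i + 1, j), by dsimp only; omega⟩) +
      s i • (dD j).lTensor (C i) (v ⟨(i, j + 1), by dsimp only; omega⟩))
    (hqT : Function.Surjective qT) (hτq : Function.Exact τ qT) :
    ∃ (f : (∀ p : {p : ℕ × ℕ // p.1 + p.2 = n}, TensorProduct k (HC p.1.1) (HD p.1.2)) →ₗ[k] HT)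
      (g : HT →ₗ[k] (∀ p : {p : ℕ × ℕ // p.1 + p.2 + 1 = n}, T p.1.1 p.1.2)),
      Function.Injective f ∧ Function.Exact f g ∧ Function.Surjective g := by
  have e_dC : ∀ i (M : Type) [AddCommGroup M] [Module k M] (x : TensorProduct k (C (i+1)) M),
      (dC i).rTensor M x = (iC i).rTensor M ((β i).rTensor M ((δ i).rTensor M x)) := by
    intro i M _ _ x; rw [hdC, LinearMap.rTensor_comp_apply, LinearMap.rTensor_comp_apply]
  have e_δi : ∀ i (M : Type) [AddCommGroup M] [Module k M] (x : TensorProduct k (ZC (i+1)) M),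
      (δ i).rTensor M ((iC (i+1)).rTensor M x) = 0 := by
    intro i M _ _ x; exact (rTensor_exact _ (hiCδ i) (hδ i)).apply_apply_eq_zero x
  have e_dj : ∀ j (M : Type) [AddCommGroup M] [Module k M] (x : TensorProduct k M (ZD (j+1))),
      (dD j).lTensor M ((jD (j+1)).lTensor M x) = 0 := by
    intro j M _ _ x
    rw [← LinearMap.lTensor_comp_apply, (hjDd j).linearMap_comp_eq_zero]; simp
  have e_md : ∀ j (M : Type) [AddCommGroup M] [Module k M] (x : TensorProduct k M (D (j+1))),
      (mk j).lTensor M ((dD j).lTensor M x) = 0 := by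
    intro j M _ _ x; exact (lTensor_exact _ (hdmk j) (hmk j)).apply_apply_eq_zero x
  have e_κ : ∀ j (M : Type) [AddCommGroup M] [Module k M] (x : TensorProduct k M (ZD j)),
      (κ j).lTensor M ((πD j).lTensor M x) = (mk j).lTensor M ((jD j).lTensor M x) := by
    intro j M _ _ x
    rw [← LinearMap.lTensor_comp_apply, hκπ, LinearMap.lTensor_comp_apply]
  have e_jζ : ∀ j (M : Type) [AddCommGroup M] [Module k M] (x : TensorProduct k M (D (j+1))),
      (dD j).lTensor M x = (jD j).lTensor M ((ζ j).lTensor M x) := by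
    intro j M _ _ x
    rw [← LinearMap.lTensor_comp_apply, hζ]
  have hsc : ∀ i (M : Type) [AddCommGroup M] [Module k M] (x : M), s i • x = 0 → x = 0 := by
    intro i M _ _ x hx
    have : s i • s i • x = 0 := by rw [hx, smul_zero]
    rwa [smul_smul, hs, one_smul] at this
  have inj2 : ∀ i j, Function.Injective
      (fun x : TensorProduct k (ZC i) (HD j) => (κ j).lTensor _ ((iC i).rTensor _ x)) := by
    intro i j x y h
    simp only [← ku_comm] at h
    exact Module.Flat.lTensor_preserves_injective_linearMap (M := ZC i) _ (hκ j) (F1 _ _ h)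
  -- the map from products of cycles
  let q : (∀ p : {p : ℕ × ℕ // p.1 + p.2 = n}, TensorProduct k (ZC p.1.1) (ZD p.1.2)) →ₗ[k]
      (∀ p : {p : ℕ × ℕ // p.1 + p.2 = n}, TensorProduct k (C p.1.1) (D p.1.2)) :=
    LinearMap.pi fun p => (iC p.1.1).rTensor _ ∘ₗ (jD p.1.2).lTensor _ ∘ₗ LinearMap.proj p
  have hq : ∀ z i j h, q z ⟨(i, j), h⟩ = (iC i).rTensor _ ((jD j).lTensor _ (z ⟨(i, j), h⟩)) :=
    fun _ _ _ _ => rfl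
  let p0 : (∀ p : {p : ℕ × ℕ // p.1 + p.2 = n}, TensorProduct k (ZC p.1.1) (ZD p.1.2)) →ₗ[k]
      (∀ p : {p : ℕ × ℕ // p.1 + p.2 = n}, TensorProduct k (HC p.1.1) (HD p.1.2)) :=
    LinearMap.pi fun p => (πC p.1.1).rTensor _ ∘ₗ (πD p.1.2).lTensor _ ∘ₗ LinearMap.proj p
  have hp0 : ∀ z i j h, p0 z ⟨(i, j), h⟩ = (πC i).rTensor _ ((πD j).lTensor _ (z ⟨(i, j), h⟩)) :=
    fun _ _ _ _ => rfl
  have p0s : Function.Surjective p0 := by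
    intro w
    have : ∀ p, ∃ z, (πC p.1.1).rTensor _ ((πD p.1.2).lTensor _ z) = w p := by
      intro p
      obtain ⟨a, ha⟩ := LinearMap.rTensor_surjective _ (hπC p.1.1) (w p)
      obtain ⟨b, hb⟩ := LinearMap.lTensor_surjective _ (hπD p.1.2) a
      exact ⟨b, by rw [hb, ha]⟩
    choose z hz using this
    exact ⟨z, funext hz⟩
  obtain ⟨ψ0, hψ0⟩ := ku_colift iT q hiT (by
    intro z
    apply hiT2
    intro i j h
    rw [hq, hq, e_dC, e_δi, ← ku_comm, e_dj]
    simp)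
  have A1 : ∀ z, p0 z = 0 → qT (ψ0 z) = 0 := by
    intro z hz
    have : ∀ i j (h : i + j + 1 = n + 1), ∃ (v : TensorProduct k (C (i+1)) (ZD j))
        (w : TensorProduct k (ZC i) (D (j+1))),
        z ⟨(i,j), by dsimp only; omega⟩ = (β i).rTensor _ ((δ i).rTensor _ v) + (ζ j).lTensor _ w := by
      intro i j h
      have h1 := congrFun hz ⟨(i, j), by dsimp only; omega⟩
      rw [hp0] at h1
      obtain ⟨h2, hh2⟩ := (rTensor_exact _ (hβπ i) (hπC i) _).1 h1
      obtain ⟨b, rfl⟩ := LinearMap.lTensor_surjective _ (hπD j) h2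
      obtain ⟨v, rfl⟩ := LinearMap.rTensor_surjective _ (hδ i) b
      rw [ku_comm] at hh2
      obtain ⟨w, hw⟩ := (lTensor_exact _ (hζπ j) (hπD j) _).1
        (show (πD j).lTensor _ (z ⟨(i, j), by dsimp only; omega⟩ -
          (β i).rTensor _ ((δ i).rTensor _ v)) = 0 by rw [map_sub, hh2, sub_self])
      exact ⟨v, w, by rw [hw]; abel⟩
    choose v w hvw using this
    obtain ⟨Va, hVa, hVa0⟩ := ku_ext1 (X := fun i j => TensorProduct k (C i) (D j))
      (fun i j h => (jD j).lTensor _ (v i j h))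
    obtain ⟨Vb, hVb, hVb0⟩ := ku_ext2 (X := fun i j => TensorProduct k (C i) (D j))
      (fun i j h => s i • (iC i).rTensor _ (w i j h))
    have : ψ0 z = τ (Va + Vb) := by
      apply hiT
      rw [hψ0]
      funext ⟨⟨i, j⟩, h⟩
      dsimp only at h
      rw [hτ, hq, hvw i j (by omega), Pi.add_apply, Pi.add_apply, hVa i j (by omega),
        hVb i j (by omega)]
      have z1 : (dC i).rTensor (D j) (Vb ⟨(i + 1, j), by dsimp only; omega⟩) = 0 := by
        obtain _ | j := j
        · rw [hVb0 (i + 1) (by omega), map_zero]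
        · rw [hVb (i + 1) j (by omega), map_smul, e_dC, e_δi]; simp
      have z2 : (dD j).lTensor (C i) (Va ⟨(i, j + 1), by dsimp only; omega⟩) = 0 := by
        obtain _ | i := i
        · rw [hVa0 (j + 1) (by omega), map_zero]
        · rw [hVa i (j + 1) (by omega), e_dj]
      rw [map_add, map_add, map_add, map_add, z1, z2, zero_add, add_zero, map_smul, smul_smul, hs,
        one_smul, ← ku_comm (iC i) (dD j), e_jζ, e_dC]
      simp only [ku_comm]
    rw [this]
    exact hτq.apply_apply_eq_zero _
  have A2 : ∀ z, qT (ψ0 z) = 0 → p0 z = 0 := by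
    intro z hz
    obtain ⟨v, hv⟩ := (hτq _).1 hz
    have hv' : ∀ i j (h : i + j = n), (iC i).rTensor _ ((jD j).lTensor _ (z ⟨(i, j), h⟩)) =
      (dC i).rTensor (D j) (v ⟨(i + 1, j), by dsimp only; omega⟩) +
      s i • (dD j).lTensor (C i) (v ⟨(i, j + 1), by dsimp only; omega⟩) := by
      intro i j h
      rw [← hτ, hv, hψ0, hq]
    funext ⟨⟨i, j⟩, h⟩
    dsimp only at h
    rw [hp0]
    have hu : ∃ u' : TensorProduct k (BC i) (ZD j), (jD j).lTensor _ u' =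
        (δ i).rTensor _ (v ⟨(i + 1, j), by dsimp only; omega⟩) := by
      obtain _ | j := j
      · exact LinearMap.lTensor_surjective _ hjD0 _
      · refine (Module.Flat.lTensor_exact _ (hjDd j) _).1 ?_
        have := congrArg ((δ i).rTensor (D j)) (hv' (i + 1) j (by omega))
        rw [map_add, e_dC, e_δi, e_δi, zero_add, map_smul, ku_comm] at this
        exact hsc _ _ _ this.symm
    obtain ⟨u', hu'⟩ := hu
    have h3 : (πD j).lTensor _ (z ⟨(i, j), h⟩ - (β i).rTensor _ u') = 0 := by
      apply inj2 i j
      dsimp only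
      rw [← ku_comm, e_κ, ku_comm, ku_comm, map_sub, map_sub, ← ku_comm (iC i) (jD j) (z ⟨(i, j), h⟩), hv', e_dC, ← hu', ku_comm, ku_comm,
        add_sub_cancel_left, map_smul, e_md]
      simp
    rw [map_sub, sub_eq_zero] at h3
    rw [h3, ← ku_comm, (rTensor_exact _ (hβπ i) (hπC i)).apply_apply_eq_zero]
    rfl
  obtain ⟨f, hf⟩ := ku_lift p0 (qT ∘ₗ ψ0) p0s A1
  let g0 : KT →ₗ[k] (∀ p : {p : ℕ × ℕ // p.1 + p.2 + 1 = n}, TensorProduct k (BC p.1.1) (Q p.1.2)) :=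
    LinearMap.pi fun p => (mk p.1.2).lTensor _ ∘ₗ (δ p.1.1).rTensor _ ∘ₗ
      LinearMap.proj (⟨(p.1.1 + 1, p.1.2), by have := p.2; dsimp only; omega⟩ :
        {p : ℕ × ℕ // p.1 + p.2 = n}) ∘ₗ iT
  have hg0 : ∀ y i j h, g0 y ⟨(i, j), h⟩ = (mk j).lTensor _ ((δ i).rTensor _
    (iT y ⟨(i + 1, j), by dsimp only at h ⊢; omega⟩)) := fun _ _ _ _ => rfl
  let τN : (∀ p : {p : ℕ × ℕ // p.1 + p.2 + 1 = n}, T p.1.1 p.1.2) →ₗ[k]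
      (∀ p : {p : ℕ × ℕ // p.1 + p.2 + 1 = n}, TensorProduct k (BC p.1.1) (Q p.1.2)) :=
    LinearMap.pi fun p => (κ p.1.2).lTensor _ ∘ₗ t p.1.1 p.1.2 ∘ₗ LinearMap.proj p
  have hτN : ∀ y i j h, τN y ⟨(i, j), h⟩ = (κ j).lTensor _ (t i j (y ⟨(i, j), h⟩)) :=
    fun _ _ _ _ => rfl
  have iτN : Function.Injective τN := by
    intro a b hab
    funext ⟨⟨i, j⟩, h⟩
    have := congrFun hab ⟨(i, j), h⟩
    rw [hτN, hτN] at this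
    exact ht _ _ (Module.Flat.lTensor_preserves_injective_linearMap (M := BC i) _ (hκ j) this)
  obtain ⟨g1, hg1⟩ := ku_colift τN g0 iτN (by
    intro y
    have : ∀ p : {p : ℕ × ℕ // p.1 + p.2 + 1 = n}, ∃ m : T p.1.1 p.1.2,
        (κ p.1.2).lTensor _ (t p.1.1 p.1.2 m) = g0 y p := by
      rintro ⟨⟨i, j⟩, h⟩
      rw [hg0]
      dsimp only at h ⊢
      have hu : ∃ u' : TensorProduct k (BC i) (ZD j), (jD j).lTensor _ u' =
          (δ i).rTensor _ (iT y ⟨(i + 1, j), by dsimp only; omega⟩) := by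
        obtain _ | j := j
        · exact LinearMap.lTensor_surjective _ hjD0 _
        · refine (Module.Flat.lTensor_exact _ (hjDd j) _).1 ?_
          have := congrArg ((δ i).rTensor (D j)) (hiT1 y (i + 1) j (by omega))
          rw [map_add, e_dC, e_δi, zero_add, map_smul, ku_comm, map_zero] at this
          exact hsc _ _ _ this
      obtain ⟨u', hu'⟩ := hu
      rw [← hu', ← e_κ]
      have h4 : (β i).rTensor _ ((πD j).lTensor _ u') = 0 := by
        apply inj2 i j
        dsimp only
        rw [ku_comm, ku_comm, e_κ, ← ku_comm (iC i) (jD j), ← ku_comm (β i) (jD j), hu', ← e_dC, eq_neg_of_add_eq_zero_left (hiT1 y i j h), map_neg, map_smul,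
          e_md]
        simp
      obtain ⟨m, hm⟩ := (htβ i j _).1 h4
      exact ⟨m, by rw [hm]⟩
    choose m hm using this
    exact ⟨m, funext hm⟩)
  have B1 : ∀ y, qT y = 0 → g1 y = 0 := by
    intro y hy
    obtain ⟨v, rfl⟩ := (hτq _).1 hy
    apply iτN
    rw [hg1, map_zero]
    funext ⟨⟨i, j⟩, h⟩
    dsimp only at h
    rw [hg0, hτ, map_add, e_dC, e_δi, zero_add, map_smul, map_smul, ku_comm, e_md]
    simp
  obtain ⟨g, hg⟩ := ku_lift qT g1 hqT B1
  have B2 : ∀ y, g0 y = 0 → ∃ z, qT y = qT (ψ0 z) := by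
    intro y hy
    have : ∀ i j (h : i + j + 1 = n), ∃ v : TensorProduct k (C (i+1)) (D (j+1)),
        (dD j).lTensor _ ((δ i).rTensor _ v) =
        (δ i).rTensor _ (iT y ⟨(i + 1, j), by dsimp only; omega⟩) := by
      intro i j h
      have h1 := congrFun hy ⟨(i, j), h⟩
      rw [hg0] at h1
      obtain ⟨v, hv⟩ := (lTensor_exact _ (hdmk j) (hmk j) _).1 h1
      obtain ⟨v', rfl⟩ := LinearMap.rTensor_surjective _ (hδ i) v
      exact ⟨v', hv⟩
    choose v hv using this
    obtain ⟨V, hV⟩ := ku_ext3 (X := fun i j => TensorProduct k (C i) (D j))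
      (fun i j h => s (i + 1) • v i j h)
    have hy' : ∀ i j (h : i + j + 1 = n),
        (δ i).rTensor _ (iT (y - τ V) ⟨(i + 1, j), by dsimp only; omega⟩) = 0 := by
      intro i j h
      rw [map_sub, Pi.sub_apply, hτ, hV i j h, map_sub, map_add, e_dC, e_δi, zero_add, map_smul,
        map_smul, map_smul, smul_smul, hs, one_smul, ku_comm, hv, sub_self]
    have ha : ∀ i j (h : i + j = n), ∃ a : TensorProduct k (ZC i) (D j),
        (iC i).rTensor _ a = iT (y - τ V) ⟨(i, j), h⟩ := by
      intro i j h
      obtain _ | i := i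
      · exact LinearMap.rTensor_surjective _ hiC0 _
      · exact (rTensor_exact _ (hiCδ i) (hδ i) _).1 (hy' i j (by omega))
    choose a ha using ha
    have hz : ∀ p : {p : ℕ × ℕ // p.1 + p.2 = n}, ∃ z : TensorProduct k (ZC p.1.1) (ZD p.1.2),
        (jD p.1.2).lTensor _ z = a p.1.1 p.1.2 p.2 := by
      rintro ⟨⟨i, j⟩, h⟩
      dsimp only at h ⊢
      obtain _ | j := j
      · exact LinearMap.lTensor_surjective _ hjD0 _
      · refine (Module.Flat.lTensor_exact _ (hjDd j) _).1 ?_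
        apply F1
        rw [ku_comm, ha, map_zero]
        have := hiT1 (y - τ V) i j (by omega)
        rw [e_dC, hy' i j (by omega), map_zero, map_zero, zero_add] at this
        exact hsc _ _ _ this
    choose z hz using hz
    refine ⟨z, ?_⟩
    have : ψ0 z = y - τ V := by
      apply hiT
      rw [hψ0]
      funext ⟨⟨i, j⟩, h⟩
      have := hz ⟨(i, j), h⟩
      dsimp only at this
      rw [hq, this, ha]
    rw [this, map_sub, hτq.apply_apply_eq_zero, sub_zero]
  have B3 : ∀ m, ∃ y, g0 y = τN m := by
    intro m
    have : ∀ i j (h : i + j + 1 = n), ∃ (b : TensorProduct k (BC i) (ZD j))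
        (x : TensorProduct k (C (i+1)) (D j)), (πD j).lTensor _ b = t i j (m ⟨(i, j), h⟩) ∧
        (δ i).rTensor _ x = (jD j).lTensor _ b := by
      intro i j h
      obtain ⟨b, hb⟩ := LinearMap.lTensor_surjective _ (hπD j) (t i j (m ⟨(i, j), h⟩))
      obtain ⟨x, hx⟩ := LinearMap.rTensor_surjective _ (hδ i) ((jD j).lTensor _ b)
      exact ⟨b, x, hb, hx⟩
    choose b x hb hx using this
    obtain ⟨X, hX, -⟩ := ku_ext1 (X := fun i j => TensorProduct k (C i) (D j)) x
    have : ∀ i j (h : i + j + 1 = n), ∃ a : TensorProduct k (ZC i) (D (j+1)),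
        (dC i).rTensor _ (x i j h) + s i • (dD j).lTensor _ (X ⟨(i, j + 1), by dsimp only; omega⟩)
          = (iC i).rTensor _ ((dD j).lTensor _ a) := by
      intro i j h
      have hc : ∃ c : TensorProduct k (ZC i) (D j), (iC i).rTensor _ c =
          (dD j).lTensor _ (X ⟨(i, j + 1), by dsimp only; omega⟩) := by
        obtain _ | i := i
        · exact LinearMap.rTensor_surjective _ hiC0 _
        · refine (rTensor_exact _ (hiCδ i) (hδ i) _).1 ?_
          rw [hX i (j + 1) (by omega), ku_comm, hx, e_dj]
      obtain ⟨c, hc⟩ := hc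
      have h5 : (mk j).lTensor _ ((β i).rTensor _ ((jD j).lTensor _ (b i j h)) + s i • c) = 0 := by
        apply F1 i
        rw [map_add, map_add, ← ku_comm (β i), ← e_κ, hb, ku_comm (β i),
          (htβ i j).apply_apply_eq_zero, map_zero, map_zero, zero_add, ku_comm, map_smul, map_smul,
          hc, e_md]
        simp
      obtain ⟨a, ha⟩ := (lTensor_exact _ (hdmk j) (hmk j) _).1 h5
      refine ⟨a, ?_⟩
      rw [ha, map_add, map_smul, hc, e_dC, hx]
    choose a ha using this
    obtain ⟨A, hA, hA0⟩ := ku_ext2 (X := fun i j => TensorProduct k (ZC i) (D j))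
      (fun i j h => - (s i • a i j h))
    let X' : ∀ p : {p : ℕ × ℕ // p.1 + p.2 = n}, TensorProduct k (C p.1.1) (D p.1.2) :=
      fun p => X p + (iC p.1.1).rTensor _ (A p)
    have hX' : ∀ i j h, X' ⟨(i, j), h⟩ = X ⟨(i, j), h⟩ + (iC i).rTensor _ (A ⟨(i, j), h⟩) :=
      fun _ _ _ => rfl
    obtain ⟨y, hy⟩ := hiT2 X' (by
      intro i j h
      rw [hX', hX', map_add, map_add, e_dC _ _ ((iC (i+1)).rTensor _ _), e_δi, map_zero, map_zero,
        add_zero, smul_add, ← add_assoc, hX i j h, ha, hA i j h, ← ku_comm, map_neg, map_neg,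
        smul_neg, map_smul, map_smul, smul_smul, hs, one_smul, add_neg_cancel])
    refine ⟨y, ?_⟩
    funext ⟨⟨i, j⟩, h⟩
    rw [hg0, hy, hX', map_add, e_δi, add_zero, hX i j h, hx, ← e_κ, hb, hτN]
  refine ⟨f, g, ?_, ?_, ?_⟩
  · rw [injective_iff_map_eq_zero]
    intro w hw
    obtain ⟨z, rfl⟩ := p0s w
    rw [hf] at hw
    exact A2 z hw
  · intro x
    obtain ⟨y, rfl⟩ := hqT x
    constructor
    · intro hy
      rw [hg] at hy
      obtain ⟨z, hz⟩ := B2 y (by rw [← hg1, hy, map_zero])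
      exact ⟨p0 z, by rw [hf, hz]; rfl⟩
    · rintro ⟨w, hw⟩
      obtain ⟨z, rfl⟩ := p0s w
      rw [← hw, hf, LinearMap.comp_apply, hg]
      apply iτN
      rw [hg1, map_zero]
      funext ⟨⟨i, j⟩, h⟩
      rw [hg0, hψ0, hq, e_δi, map_zero]
      rfl
  · intro m
    obtain ⟨y, hy⟩ := B3 m
    exact ⟨qT y, by rw [hg]; exact iτN (by rw [hg1, hy])⟩

end


section
variable {k : Type} [CommRing k] (K : ChainComplex (ModuleCat.{0} k) ℕ)

theorem ku_iCycles_inj (i : ℕ) : Function.Injective (K.iCycles i).hom :=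
  (ModuleCat.mono_iff_injective _).1 inferInstance

theorem ku_iCycles_zero : Function.Surjective (K.iCycles 0).hom :=
  (ModuleCat.epi_iff_surjective _).1 inferInstance

theorem ku_homologyπ_surj (i : ℕ) : Function.Surjective (K.homologyπ i).hom :=
  (ModuleCat.epi_iff_surjective _).1 inferInstance

theorem ku_pOpcycles_surj (i : ℕ) : Function.Surjective (K.pOpcycles i).hom :=
  (ModuleCat.epi_iff_surjective _).1 inferInstance

theorem ku_homologyι_inj (i : ℕ) : Function.Injective (K.homologyι i).hom :=
  (ModuleCat.mono_iff_injective _).1 inferInstance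

theorem ku_iCycles_exact (i : ℕ) :
    Function.Exact (K.iCycles (i + 1)).hom (K.d (i + 1) i).hom := by
  have := ShortComplex.exact_of_f_is_kernel
    (ShortComplex.mk _ _ (K.iCycles_d (i + 1) i)) (K.cyclesIsKernel (i + 1) i (by simp))
  exact (ShortComplex.ShortExact.moduleCat_exact_iff_function_exact _).1 this

theorem ku_homology_exact (i : ℕ) :
    Function.Exact (K.toCycles (i + 1) i).hom (K.homologyπ i).hom := by
  have := ShortComplex.exact_of_g_is_cokernel
    (ShortComplex.mk _ _ (K.toCycles_comp_homologyπ (i + 1) i))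
    (K.homologyIsCokernel (i + 1) i (by simp))
  exact (ShortComplex.ShortExact.moduleCat_exact_iff_function_exact _).1 this

theorem ku_opcycles_exact (i : ℕ) :
    Function.Exact (K.d (i + 1) i).hom (K.pOpcycles i).hom := by
  have := ShortComplex.exact_of_g_is_cokernel
    (ShortComplex.mk _ _ (K.d_pOpcycles (i + 1) i))
    (K.opcyclesIsCokernel (i + 1) i (by simp))
  exact (ShortComplex.ShortExact.moduleCat_exact_iff_function_exact _).1 this

theorem ku_toCycles_i (i : ℕ) (x : K.X (i + 1)) :
    (K.iCycles i).hom ((K.toCycles (i + 1) i).hom x) = (K.d (i + 1) i).hom x := by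
  rw [← K.toCycles_i (i + 1) i]; rfl

theorem ku_π_ι (i : ℕ) (x : K.cycles i) :
    (K.homologyι i).hom ((K.homologyπ i).hom x) = (K.pOpcycles i).hom ((K.iCycles i).hom x) := by
  have := congrArg (fun f => f.hom x) (K.homology_π_ι i)
  exact this

theorem ku_beta (i : ℕ) : ∃ β : LinearMap.range (K.d (i + 1) i).hom →ₗ[k] K.cycles i,
    (∀ x, β ((K.d (i + 1) i).hom.rangeRestrict x) = (K.toCycles (i + 1) i).hom x) ∧
    Function.Injective β ∧ Function.Exact β (K.homologyπ i).hom := by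
  obtain ⟨β, hβ⟩ := ku_lift (K.d (i + 1) i).hom.rangeRestrict (K.toCycles (i + 1) i).hom
    (LinearMap.surjective_rangeRestrict _) (by
      intro w hw
      apply ku_iCycles_inj
      rw [ku_toCycles_i, map_zero]
      exact congrArg Subtype.val hw)
  refine ⟨β, hβ, ?_, ?_⟩
  · rw [injective_iff_map_eq_zero]
    intro a ha
    obtain ⟨a, rfl⟩ := LinearMap.surjective_rangeRestrict _ a
    rw [hβ] at ha
    apply Subtype.ext
    change (K.d (i + 1) i).hom a = 0
    rw [← ku_toCycles_i, ha, map_zero]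
  · intro y
    rw [ku_homology_exact K i y]
    constructor
    · rintro ⟨x, rfl⟩
      exact ⟨_, hβ x⟩
    · rintro ⟨x, rfl⟩
      obtain ⟨a, rfl⟩ := LinearMap.surjective_rangeRestrict _ x
      exact ⟨a, (hβ a).symm⟩

theorem ku_delta_exact (i : ℕ) :
    Function.Exact (K.iCycles (i + 1)).hom (K.d (i + 1) i).hom.rangeRestrict := by
  intro y
  rw [← ku_iCycles_exact K i y]
  exact ⟨fun h => congrArg Subtype.val h, fun h => Subtype.ext h⟩

theorem ku_cyc (hC : ∀ i, Module.Flat k (K.X i))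
    (hB : ∀ i : ℕ, Module.Flat k (LinearMap.range (K.d (i + 1) i).hom)) (i : ℕ) :
    Module.Flat k (K.cycles i) ∧
    ∀ (M : Type) [AddCommGroup M] [Module k M],
      Function.Injective ((K.iCycles i).hom.rTensor M) := by
  cases i with
  | zero =>
    let e := LinearEquiv.ofBijective (K.iCycles 0).hom ⟨ku_iCycles_inj K 0, ku_iCycles_zero K⟩
    refine ⟨Module.Flat.of_linearEquiv e, ?_⟩
    intro M _ _
    exact (e.rTensor M).injective
  | succ i =>
    refine ⟨ku_flat (K.iCycles (i + 1)).hom (K.d (i + 1) i).hom.rangeRestrict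
      (ku_iCycles_inj K _) (LinearMap.surjective_rangeRestrict _) (ku_delta_exact K i), ?_⟩
    intro M _ _
    exact ku_F1 (K.iCycles (i + 1)).hom (K.d (i + 1) i).hom.rangeRestrict
      (ku_iCycles_inj K _) (LinearMap.surjective_rangeRestrict _) (ku_delta_exact K i)

theorem ku_torcat (H Y : ModuleCat.{0} k) {B Z : Type} [AddCommGroup B] [Module k B]
    [AddCommGroup Z] [Module k Z] [Module.Flat k Z] (i : B →ₗ[k] Z) (p : Z →ₗ[k] H)
    (hi : Function.Injective i) (hp : Function.Surjective p) (hip : Function.Exact i p) :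
    ∃ t : (((Tor (ModuleCat k) 1).obj H).obj Y) →ₗ[k] TensorProduct k B Y,
      Function.Injective t ∧ Function.Exact t (i.rTensor Y) := by
  let P := projectiveResolution Y
  let F : ModuleCat k ⥤ ModuleCat k := (tensoringLeft (ModuleCat k)).obj H
  let FK := (F.mapHomologicalComplex (ComplexShape.down ℕ)).obj P.complex
  let e : ((Tor (ModuleCat k) 1).obj H).obj Y ≅ FK.homology 1 := P.isoLeftDerivedObj F 1
  have hflat : Module.Flat k (P.complex.X 0) := by
    have : Projective (P.complex.X 0) := P.projective 0
    have := (IsProjective.iff_projective (P.complex.X 0)).2 this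
    infer_instance
  have h21 : Function.Exact (P.complex.d 2 1).hom (P.complex.d 1 0).hom :=
    (ShortComplex.ShortExact.moduleCat_exact_iff_function_exact _).1 (P.exact_succ 0)
  have h10 : Function.Exact (P.complex.d 1 0).hom (P.π.f 0).hom := by
    have := ShortComplex.exact_of_g_is_cokernel
      (ShortComplex.mk _ _ P.complex_d_comp_π_f_zero) P.isColimitCokernelCofork
    exact (ShortComplex.ShortExact.moduleCat_exact_iff_function_exact _).1 this
  have hε : Function.Surjective (P.π.f 0).hom :=
    (ModuleCat.epi_iff_surjective _).1 inferInstance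
  refine ku_tor (Y := Y) i p hi hp hip (P.complex.d 2 1).hom (P.complex.d 1 0).hom (P.π.f 0).hom
    h21 h10 hε (K := FK.cycles 1) (FK.iCycles 1).hom (e.inv.hom ∘ₗ (FK.homologyπ 1).hom)
    (ku_iCycles_inj FK 1) (ku_iCycles_exact FK 0) ?_ ?_
  · exact (e.toLinearEquiv.symm.surjective).comp (ku_homologyπ_surj FK 1)
  · intro x
    have h1 : (e.inv.hom ∘ₗ (FK.homologyπ 1).hom) x = 0 ↔ (FK.homologyπ 1).hom x = 0 :=
      e.toLinearEquiv.symm.map_eq_zero_iff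
    rw [h1, ku_homology_exact FK 1 x]
    constructor
    · rintro ⟨c, rfl⟩
      exact ⟨c, (ku_toCycles_i FK 1 c).symm⟩
    · rintro ⟨c, hc⟩
      exact ⟨c, ku_iCycles_inj FK 1 ((ku_toCycles_i FK 1 c).trans hc)⟩
end

section
variable {k : Type} [CommRing k] (C D : ChainComplex (ModuleCat.{0} k) ℕ)

abbrev KuPi (n : ℕ) : Type :=
  ∀ p : {p : ℕ × ℕ // p.1 + p.2 = n}, TensorProduct k (C.X p.1.1) (D.X p.1.2)

theorem ku_fin (n : ℕ) : Finite {p : ℕ × ℕ // p.1 + p.2 = n} := by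
  refine Set.Finite.to_subtype (s := {p : ℕ × ℕ | p.1 + p.2 = n}) ?_
  refine (Finset.finite_toSet (Finset.HasAntidiagonal.antidiagonal n)).subset ?_
  intro p hp
  simpa using hp

/-- inclusion of a summand, as a linear map -/
noncomputable def kuInc (i j n : ℕ) (h : i + j = n) :
    TensorProduct k (C.X i) (D.X j) →ₗ[k] (HomologicalComplex.tensorObj C D).X n :=
  (HomologicalComplex.ιTensorObj C D i j n h).hom

theorem ku_ext {n : ℕ} {M : Type} [AddCommGroup M] [Module k M]
    (f g : (HomologicalComplex.tensorObj C D).X n →ₗ[k] M)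
    (h : ∀ i j (h : i + j = n) z, f (kuInc C D i j n h z) = g (kuInc C D i j n h z)) : f = g := by
  have : ModuleCat.ofHom f = ModuleCat.ofHom g := by
    apply HomologicalComplex.mapBifunctor.hom_ext
    intro i j hij
    apply ModuleCat.hom_ext
    apply LinearMap.ext
    intro z
    exact h i j hij z
  exact congrArg ModuleCat.Hom.hom this

open Classical in
/-- the comparison map -/
noncomputable def kuPhi (n : ℕ) : (HomologicalComplex.tensorObj C D).X n →ₗ[k] KuPi C D n :=
  (HomologicalComplex.mapBifunctorDesc (K₁ := C) (K₂ := D) (F := curriedTensor (ModuleCat k))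
    (c := ComplexShape.down ℕ) (j := n) (A := ModuleCat.of k (KuPi C D n))
    (fun i j h => ModuleCat.ofHom (LinearMap.single k
      (fun p : {p : ℕ × ℕ // p.1 + p.2 = n} => TensorProduct k (C.X p.1.1) (D.X p.1.2))
      ⟨(i, j), h⟩))).hom

open Classical in
theorem kuPhi_inc (i j n : ℕ) (h : i + j = n) (z : TensorProduct k (C.X i) (D.X j)) :
    kuPhi C D n (kuInc C D i j n h z) = LinearMap.single k
      (fun p : {p : ℕ × ℕ // p.1 + p.2 = n} => TensorProduct k (C.X p.1.1) (D.X p.1.2))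
      ⟨(i, j), h⟩ z := by
  have := HomologicalComplex.ι_mapBifunctorDesc (K₁ := C) (K₂ := D)
    (F := curriedTensor (ModuleCat k))
    (c := ComplexShape.down ℕ) (j := n) (A := ModuleCat.of k (KuPi C D n))
    (fun i j h => ModuleCat.ofHom (LinearMap.single k
      (fun p : {p : ℕ × ℕ // p.1 + p.2 = n} => TensorProduct k (C.X p.1.1) (D.X p.1.2))
      ⟨(i, j), h⟩)) i j h
  exact congrArg (fun f => f.hom z) this

open Classical in
theorem kuPhi_bij (n : ℕ) : Function.Bijective (kuPhi C D n) := by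
  have := ku_fin n
  have := Fintype.ofFinite {p : ℕ × ℕ // p.1 + p.2 = n}
  let Ψ : KuPi C D n →ₗ[k] (HomologicalComplex.tensorObj C D).X n :=
    ∑ p : {p : ℕ × ℕ // p.1 + p.2 = n}, kuInc C D p.1.1 p.1.2 n p.2 ∘ₗ LinearMap.proj p
  have h0 : ∀ (p : {p : ℕ × ℕ // p.1 + p.2 = n}) z,
      Ψ (LinearMap.single k (fun p : {p : ℕ × ℕ // p.1 + p.2 = n} =>
        TensorProduct k (C.X p.1.1) (D.X p.1.2)) p z) = kuInc C D p.1.1 p.1.2 n p.2 z := by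
    intro p z
    simp only [Ψ, LinearMap.sum_apply, LinearMap.comp_apply, LinearMap.proj_apply]
    rw [Finset.sum_eq_single p]
    · simp
    · intro b _ hb
      simp [Pi.single_eq_of_ne hb]
    · simp
  have h1 : Ψ ∘ₗ kuPhi C D n = LinearMap.id := by
    apply ku_ext
    intro i j h z
    rw [LinearMap.comp_apply, kuPhi_inc, h0]
    rfl
  have h2 : kuPhi C D n ∘ₗ Ψ = LinearMap.id := by
    apply LinearMap.pi_ext
    intro p z
    have := h0 p z
    simp only [LinearMap.coe_single] at this
    rw [LinearMap.comp_apply, this, kuPhi_inc]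
    rfl
  exact Function.bijective_iff_has_inverse.2 ⟨Ψ, fun x => LinearMap.congr_fun h1 x,
    fun x => LinearMap.congr_fun h2 x⟩

/-- a projection -/
def kuProj (n i j : ℕ) (h : i + j = n) : KuPi C D n →ₗ[k] TensorProduct k (C.X i) (D.X j) :=
  LinearMap.proj (φ := fun p : {p : ℕ × ℕ // p.1 + p.2 = n} =>
    TensorProduct k (C.X p.1.1) (D.X p.1.2)) ⟨(i, j), h⟩

/-- the differential on the product -/
noncomputable def kuE (n : ℕ) : KuPi C D (n + 1) →ₗ[k] KuPi C D n :=
  LinearMap.pi fun p =>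
    (C.d (p.1.1 + 1) p.1.1).hom.rTensor (D.X p.1.2) ∘ₗ
      kuProj C D (n + 1) (p.1.1 + 1) p.1.2 (by have := p.2; omega) +
    ((-1 : k) ^ p.1.1) • ((D.d (p.1.2 + 1) p.1.2).hom.lTensor (C.X p.1.1) ∘ₗ
      kuProj C D (n + 1) p.1.1 (p.1.2 + 1) (by have := p.2; omega))

theorem kuE_apply (n : ℕ) (v : KuPi C D (n + 1)) (i j : ℕ) (h : i + j = n) :
    kuE C D n v ⟨(i, j), h⟩ =
      (C.d (i + 1) i).hom.rTensor (D.X j) (v ⟨(i + 1, j), by dsimp only; omega⟩) +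
      ((-1 : k) ^ i) • (D.d (j + 1) j).hom.lTensor (C.X i)
        (v ⟨(i, j + 1), by dsimp only; omega⟩) := rfl

theorem ku_D1_succ (n i j : ℕ) (h : i + 1 + j = n + 1) (z : TensorProduct k (C.X (i + 1)) (D.X j)) :
    (HomologicalComplex.mapBifunctor.D₁ C D (curriedTensor (ModuleCat k)) (ComplexShape.down ℕ)
      (n + 1) n).hom (kuInc C D (i + 1) j (n + 1) h z) =
    kuInc C D i j n (by omega) ((C.d (i + 1) i).hom.rTensor (D.X j) z) := by
  have h1 := HomologicalComplex.mapBifunctor.ι_D₁ C D (curriedTensor (ModuleCat k))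
    (ComplexShape.down ℕ) (n + 1) n (i + 1) j h
  have h2 := HomologicalComplex.mapBifunctor.d₁_eq C D (curriedTensor (ModuleCat k))
    (ComplexShape.down ℕ) (i₁ := i + 1) (i₁' := i) rfl j n
    (show i + j = n by omega)
  have h3 : ComplexShape.ε₁ (ComplexShape.down ℕ) (ComplexShape.down ℕ) (ComplexShape.down ℕ)
    (i + 1, j) = 1 := rfl
  rw [h2, h3, one_smul] at h1
  exact congrArg (fun f => f.hom z) h1

theorem ku_D1_zero (n j : ℕ) (h : 0 + j = n + 1) (z : TensorProduct k (C.X 0) (D.X j)) :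
    (HomologicalComplex.mapBifunctor.D₁ C D (curriedTensor (ModuleCat k)) (ComplexShape.down ℕ)
      (n + 1) n).hom (kuInc C D 0 j (n + 1) h z) = 0 := by
  have h1 := HomologicalComplex.mapBifunctor.ι_D₁ C D (curriedTensor (ModuleCat k))
    (ComplexShape.down ℕ) (n + 1) n 0 j h
  rw [HomologicalComplex.mapBifunctor.d₁_eq_zero _ _ _ _ _ _ _ (by simp)] at h1
  exact congrArg (fun f => f.hom z) h1

theorem ku_D2_succ (n i j : ℕ) (h : i + (j + 1) = n + 1)
    (z : TensorProduct k (C.X i) (D.X (j + 1))) :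
    (HomologicalComplex.mapBifunctor.D₂ C D (curriedTensor (ModuleCat k)) (ComplexShape.down ℕ)
      (n + 1) n).hom (kuInc C D i (j + 1) (n + 1) h z) =
    ((-1 : k) ^ i) • kuInc C D i j n (by omega) ((D.d (j + 1) j).hom.lTensor (C.X i) z) := by
  have h1 := HomologicalComplex.mapBifunctor.ι_D₂ C D (curriedTensor (ModuleCat k))
    (ComplexShape.down ℕ) (n + 1) n i (j + 1) h
  have h2 := HomologicalComplex.mapBifunctor.d₂_eq C D (curriedTensor (ModuleCat k))
    (ComplexShape.down ℕ) i (i₂ := j + 1) (i₂' := j) rfl n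
    (show i + j = n by omega)
  have h3 : ComplexShape.ε₂ (ComplexShape.down ℕ) (ComplexShape.down ℕ) (ComplexShape.down ℕ)
    (i, j + 1) = (-1) ^ i := rfl
  rw [h2, h3] at h1
  have h4 := congrArg (fun f => f.hom z) h1
  refine Eq.trans h4 ?_
  rcases Nat.even_or_odd i with hi | hi
  · rw [hi.neg_one_pow, hi.neg_one_pow, one_smul, one_smul]
    rfl
  · rw [hi.neg_one_pow, hi.neg_one_pow, neg_smul, one_smul, Units.neg_smul, one_smul]
    rfl

theorem ku_D2_zero (n i : ℕ) (h : i + 0 = n + 1) (z : TensorProduct k (C.X i) (D.X 0)) :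
    (HomologicalComplex.mapBifunctor.D₂ C D (curriedTensor (ModuleCat k)) (ComplexShape.down ℕ)
      (n + 1) n).hom (kuInc C D i 0 (n + 1) h z) = 0 := by
  have h1 := HomologicalComplex.mapBifunctor.ι_D₂ C D (curriedTensor (ModuleCat k))
    (ComplexShape.down ℕ) (n + 1) n i 0 h
  rw [HomologicalComplex.mapBifunctor.d₂_eq_zero _ _ _ _ _ _ _ (by simp)] at h1
  exact congrArg (fun f => f.hom z) h1

open Classical in
theorem kuPhi_d (n : ℕ) (x : (HomologicalComplex.tensorObj C D).X (n + 1)) :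
    kuPhi C D n (((HomologicalComplex.tensorObj C D).d (n + 1) n).hom x) =
      kuE C D n (kuPhi C D (n + 1) x) := by
  have : kuPhi C D n ∘ₗ ((HomologicalComplex.tensorObj C D).d (n + 1) n).hom =
      kuE C D n ∘ₗ kuPhi C D (n + 1) := by
    apply ku_ext
    intro a b h z
    rw [LinearMap.comp_apply, LinearMap.comp_apply, kuPhi_inc]
    have hd : ((HomologicalComplex.tensorObj C D).d (n + 1) n).hom (kuInc C D a b (n + 1) h z) =
      (HomologicalComplex.mapBifunctor.D₁ C D (curriedTensor (ModuleCat k)) (ComplexShape.down ℕ)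
        (n + 1) n).hom (kuInc C D a b (n + 1) h z) +
      (HomologicalComplex.mapBifunctor.D₂ C D (curriedTensor (ModuleCat k)) (ComplexShape.down ℕ)
        (n + 1) n).hom (kuInc C D a b (n + 1) h z) := rfl
    rw [hd, map_add]
    funext ⟨⟨i, j⟩, hij⟩
    rw [kuE_apply, Pi.add_apply]
    congr 1
    · cases a with
      | zero =>
        rw [ku_D1_zero, map_zero, LinearMap.single_apply, Pi.single_eq_of_ne, map_zero]
        · rfl
        · intro h'; simp at h'
      | succ a =>
        rw [ku_D1_succ, kuPhi_inc, LinearMap.single_apply, LinearMap.single_apply]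
        by_cases hh : a = i ∧ b = j
        · obtain ⟨rfl, rfl⟩ := hh
          rw [Pi.single_eq_same, Pi.single_eq_same]
        · rw [Pi.single_eq_of_ne, Pi.single_eq_of_ne, map_zero]
          · intro h'; simp at h'; omega
          · intro h'; simp at h'; omega
    · cases b with
      | zero =>
        rw [ku_D2_zero, map_zero, LinearMap.single_apply, Pi.single_eq_of_ne, map_zero, smul_zero]
        · rfl
        · intro h'; simp at h'
      | succ b =>
        rw [ku_D2_succ, map_smul, kuPhi_inc, LinearMap.single_apply, LinearMap.single_apply,
          Pi.smul_apply]
        by_cases hh : a = i ∧ b = j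
        · obtain ⟨rfl, rfl⟩ := hh
          rw [Pi.single_eq_same, Pi.single_eq_same]
        · rw [Pi.single_eq_of_ne, Pi.single_eq_of_ne, map_zero, smul_zero, smul_zero]
          · intro h'; simp at h'; omega
          · intro h'; simp at h'; omega
  exact LinearMap.congr_fun this x
end

theorem ku_fin1 (n : ℕ) : Finite {p : ℕ × ℕ // p.1 + p.2 + 1 = n} := by
  cases n with
  | zero =>
    have : IsEmpty {p : ℕ × ℕ // p.1 + p.2 + 1 = 0} := ⟨fun p => by have := p.2; omega⟩
    infer_instance
  | succ n =>
    have := ku_fin n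
    exact Finite.of_injective
      (fun p : {p : ℕ × ℕ // p.1 + p.2 + 1 = n + 1} =>
        (⟨p.1, by have := p.2; omega⟩ : {p : ℕ × ℕ // p.1 + p.2 = n}))
      (fun a b h => Subtype.ext (Subtype.mk.inj h))

theorem ku_pi (k : Type) [CommRing k] (C D : ChainComplex (ModuleCat.{0} k) ℕ)
    (hCflat : ∀ i : ℕ, Module.Flat k (C.X i))
    (hBflat : ∀ i : ℕ, Module.Flat k (LinearMap.range (C.d (i + 1) i).hom)) (n : ℕ) :
    ∃ (f : (∀ p : {p : ℕ × ℕ // p.1 + p.2 = n},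
            TensorProduct k (C.homology p.1.1) (D.homology p.1.2)) →ₗ[k]
          (HomologicalComplex.tensorObj C D).homology n)
      (g : ((HomologicalComplex.tensorObj C D).homology n : Type) →ₗ[k]
          (∀ p : {p : ℕ × ℕ // p.1 + p.2 + 1 = n},
            ((Tor (ModuleCat k) 1).obj (C.homology p.1.1)).obj (D.homology p.1.2))),
      Function.Injective f ∧ Function.Exact f g ∧ Function.Surjective g := by
  have hZ : ∀ i, Module.Flat k (C.cycles i) := fun i => (ku_cyc C hCflat hBflat i).1
  choose β hβ1 hβ2 hβ3 using ku_beta C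
  have ht0 := fun i j => ku_torcat (C.homology i) (D.homology j) (β i) (C.homologyπ i).hom
    (hβ2 i) (ku_homologyπ_surj C i) (hβ3 i)
  choose t ht1 ht2 using ht0
  let T := HomologicalComplex.tensorObj C D
  let e : T.X (n + 1) ≃ₗ[k] KuPi C D (n + 1) :=
    LinearEquiv.ofBijective (kuPhi C D (n + 1)) (kuPhi_bij C D (n + 1))
  have he : ∀ v, kuPhi C D (n + 1) (e.symm v) = v := fun v => e.apply_symm_apply v
  refine ku_main (C := fun i => C.X i) (D := fun i => D.X i) (ZC := fun i => C.cycles i)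
    (BC := fun i => LinearMap.range (C.d (i + 1) i).hom) (HC := fun i => C.homology i)
    (ZD := fun i => D.cycles i) (HD := fun i => D.homology i) (Q := fun i => D.opcycles i)
    (T := fun i j => ((Tor (ModuleCat k) 1).obj (C.homology i)).obj (D.homology j))
    (fun i => (C.d (i + 1) i).hom) (fun i => (D.d (i + 1) i).hom)
    (fun i => (C.iCycles i).hom) (fun i => (C.d (i + 1) i).hom.rangeRestrict) β
    (fun i => (C.homologyπ i).hom) (fun i => (D.iCycles i).hom)
    (fun i => (D.toCycles (i + 1) i).hom) (fun i => (D.homologyπ i).hom)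
    (fun i => (D.pOpcycles i).hom) (fun i => (D.homologyι i).hom) t
    ?_ (fun i => (ku_cyc C hCflat hBflat i).2)
    (fun i => LinearMap.surjective_rangeRestrict _)
    (ku_delta_exact C) (ku_iCycles_zero C) hβ3 (ku_homologyπ_surj C)
    (ku_iCycles_inj D) (ku_iCycles_exact D) (ku_iCycles_zero D) ?_ (ku_homology_exact D)
    (ku_homologyπ_surj D) (ku_opcycles_exact D) (ku_pOpcycles_surj D) (ku_homologyι_inj D) ?_
    ht1 ht2 n (fun i => (-1) ^ i) ?_ (KT := T.cycles n) (HT := T.homology n)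
    (kuPhi C D n ∘ₗ (T.iCycles n).hom) (T.homologyπ n).hom
    ((T.toCycles (n + 1) n).hom ∘ₗ e.symm.toLinearMap) ?_ ?_ ?_ ?_ (ku_homologyπ_surj T n) ?_
  · intro i
    apply LinearMap.ext
    intro x
    simp only [LinearMap.comp_apply]
    rw [hβ1, ku_toCycles_i]
  · intro i
    apply LinearMap.ext
    intro x
    exact (ku_toCycles_i D i x).symm
  · intro i
    apply LinearMap.ext
    intro x
    exact ku_π_ι D i x
  · intro i
    rw [← mul_pow]; simp
  · exact (kuPhi_bij C D n).1.comp (ku_iCycles_inj T n)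
  · intro y i j h
    subst h
    have h1 : (T.d (i + j + 1) (i + j)).hom ((T.iCycles (i + j + 1)).hom y) = 0 :=
      (ku_iCycles_exact T (i + j) _).2 ⟨_, rfl⟩
    have h2 := kuPhi_d C D (i + j) ((T.iCycles (i + j + 1)).hom y)
    rw [h1, map_zero] at h2
    have h3 := congrFun h2 ⟨(i, j), rfl⟩
    exact h3.symm
  · intro x hx
    obtain ⟨w, rfl⟩ := (kuPhi_bij C D n).2 x
    cases n with
    | zero =>
      obtain ⟨y, rfl⟩ := ku_iCycles_zero T w
      exact ⟨y, rfl⟩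
    | succ m =>
      have h2 := kuPhi_d C D m w
      have h3 : kuE C D m (kuPhi C D (m + 1) w) = 0 := by
        funext ⟨⟨i, j⟩, hij⟩
        have hij' : i + j = m := hij
        exact hx i j (by omega)
      rw [h3] at h2
      have h4 : (T.d (m + 1) m).hom w = 0 := by
        apply (kuPhi_bij C D m).1
        rw [map_zero]; exact h2
      obtain ⟨y, rfl⟩ := (ku_iCycles_exact T m w).1 h4
      exact ⟨y, rfl⟩
  · intro v i j h
    have h1 : (kuPhi C D n ∘ₗ (T.iCycles n).hom) (((T.toCycles (n + 1) n).hom ∘ₗ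
        e.symm.toLinearMap) v) = kuE C D n v := by
      refine (congrArg (kuPhi C D n) (ku_toCycles_i T n (e.symm v))).trans ?_
      refine (kuPhi_d C D n (e.symm v)).trans ?_
      rw [he]
    rw [h1]
    rfl
  · intro y
    rw [ku_homology_exact T n y]
    constructor
    · rintro ⟨x, rfl⟩
      exact ⟨e x, congrArg (T.toCycles (n + 1) n).hom (e.symm_apply_apply x)⟩
    · rintro ⟨x, rfl⟩
      exact ⟨e.symm x, rfl⟩

/-- **Künneth short exact sequence.**
Let `k` be a commutative ring and let `C`, `D` be `ℕ`-indexed chain complexes of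
`k`-modules.  If every term `C_i` is a flat `k`-module and every boundary module
`B_i(C) = im(d : C_{i+1} → C_i)` is a flat `k`-module, then for every `n ≥ 0` there is a
short exact sequence of `k`-modules
`0 → ⊕_{i+j=n} H_i(C) ⊗_k H_j(D) → H_n(C ⊗ D) → ⊕_{i+j=n-1} Tor_1^k(H_i(C), H_j(D)) → 0`,
where `C ⊗ D` denotes the total complex of the levelwise tensor product double complex. -/
theorem kuenneth_short_exact_sequence
    (k : Type) [CommRing k] (C D : ChainComplex (ModuleCat k) ℕ)
    (hCflat : ∀ i : ℕ, Module.Flat k (C.X i))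
    (hBflat : ∀ i : ℕ, Module.Flat k (LinearMap.range (C.d (i + 1) i).hom)) (n : ℕ) :
    ∃ (f : (DirectSum {p : ℕ × ℕ // p.1 + p.2 = n}
            (fun p => TensorProduct k (C.homology p.1.1) (D.homology p.1.2))) →ₗ[k]
          (HomologicalComplex.tensorObj C D).homology n)
      (g : ((HomologicalComplex.tensorObj C D).homology n : Type) →ₗ[k]
          (DirectSum {p : ℕ × ℕ // p.1 + p.2 + 1 = n}
            (fun p => ((Tor (ModuleCat k) 1).obj (C.homology p.1.1)).obj (D.homology p.1.2)))),
      Function.Injective f ∧ Function.Exact f g ∧ Function.Surjective g := by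
  classical
  have := ku_fin n
  have := ku_fin1 n
  have := Fintype.ofFinite {p : ℕ × ℕ // p.1 + p.2 = n}
  have := Fintype.ofFinite {p : ℕ × ℕ // p.1 + p.2 + 1 = n}
  obtain ⟨f, g, hf, hfg, hg⟩ := ku_pi k C D hCflat hBflat n
  let e1 := DirectSum.linearEquivFunOnFintype k {p : ℕ × ℕ // p.1 + p.2 = n}
    (fun p => TensorProduct k (C.homology p.1.1) (D.homology p.1.2))
  let e2 := DirectSum.linearEquivFunOnFintype k {p : ℕ × ℕ // p.1 + p.2 + 1 = n}
    (fun p => ((Tor (ModuleCat k) 1).obj (C.homology p.1.1)).obj (D.homology p.1.2))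
  refine ⟨f ∘ₗ e1.toLinearMap, e2.symm.toLinearMap ∘ₗ g, hf.comp e1.injective, ?_,
    e2.symm.surjective.comp hg⟩
  intro y
  have h1 : (e2.symm.toLinearMap ∘ₗ g) y = 0 ↔ g y = 0 := e2.symm.map_eq_zero_iff
  rw [h1, hfg y]
  constructor
  · rintro ⟨x, rfl⟩
    exact ⟨e1.symm x, congrArg f (e1.apply_symm_apply x)⟩
  · rintro ⟨x, rfl⟩
    exact ⟨e1 x, rfl⟩
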